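/- Let Π be a CNF theory and p an atom. Then Forget(Π, {p}) ≡ unfold(Π, p), where unfold(Π, p) is the strong unfolding of Π with respect to p. -/

import Mathlib

variable {α : Type*} [Fintype α] [DecidableEq α]

/-- A clause (or term): a finite set of literals, where a literal is an atom
paired with a polarity (`true` = positive occurrence, `false` = negated). -/
abbrev Clause (α : Type*) := Finset (α × Bool)

/-- A finite set of literals is a legal clause/term if it contains no
complementary pair of literals. -/
def IsClause (c : Clause α) : Prop := ∀ p : α, ¬((p, true) ∈ c ∧ (p, false) ∈ c)

instance : DecidablePred (IsClause (α := α)) := fun c =>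
  decidable_of_iff (∀ p : α, ¬((p, true) ∈ c ∧ (p, false) ∈ c)) Iff.rfl

/-- The atoms occurring in a clause/term. -/
def varsC (c : Clause α) : Finset α := c.image Prod.fst

/-- The atoms occurring positively in a clause/term. -/
def posC (c : Clause α) : Finset α := (c.filter fun l => l.2 = true).image Prod.fst

/-- The atoms occurring negatively in a clause/term. -/
def negC (c : Clause α) : Finset α := (c.filter fun l => l.2 = false).image Prod.fst

/-- The resolvent of two clauses on atom `p`. -/
def res (c c' : Clause α) (p : α) : Clause α :=
  (c ∪ c') \ ({(p, true), (p, false)} : Finset (α × Bool))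

/-- `c` and `c'` are resolvable on atom `p`: `p` occurs in one of them and `¬p` in
the other, and the resolvent contains no complementary pair of literals. -/
def ResolvableOn (c c' : Clause α) (p : α) : Prop :=
  ((p, true) ∈ c ∧ (p, false) ∈ c' ∨ (p, false) ∈ c ∧ (p, true) ∈ c') ∧ IsClause (res c c' p)

/-- Renaming of a literal: flip the polarity of atoms in `V`. -/
def renLit (V : Finset α) (l : α × Bool) : α × Bool := if l.1 ∈ V then (l.1, !l.2) else l

/-- Renaming of a clause w.r.t. the atoms in `V`. -/
def renClause (V : Finset α) (c : Clause α) : Clause α := c.image (renLit V)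

/-- Renaming of a CNF theory w.r.t. the atoms in `V`. -/
def renTheory (V : Finset α) (T : Finset (Clause α)) : Finset (Clause α) := T.image (renClause V)

/-- A Horn clause: at most one positive literal. -/
def HornClause (c : Clause α) : Prop := (posC c).card ≤ 1

/-- A Horn theory: a finite set of Horn clauses. -/
def IsHornTheory (T : Finset (Clause α)) : Prop := ∀ c ∈ T, HornClause c

/-- A Krom theory: each clause contains at most 2 literals. -/
def IsKromTheory (T : Finset (Clause α)) : Prop := ∀ c ∈ T, c.card ≤ 2

/-- `T` is Horn renamable: some renaming of `T` is a Horn theory. -/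
def IsRenHorn (T : Finset (Clause α)) : Prop := ∃ V : Finset α, IsHornTheory (renTheory V T)

/-- The QH-conditions for sets of atoms `Q`, `H` and a clause `c`. -/
def QHcond (Q H : Finset α) (c : Clause α) : Prop :=
  (varsC c ∩ Q).card ≤ 2 ∧ (posC c ∩ H).card ≤ 1 ∧
    ((posC c ∩ H).card = 1 → varsC c ∩ Q = ∅)

/-- The atoms occurring in a CNF theory. -/
def varsT (T : Finset (Clause α)) : Finset α := T.sup varsC

/-- `T` has a QH-partition: a partition `{Q, H}` of its atoms satisfying the
QH-conditions for each of its clauses. -/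
def HasQHPartition (T : Finset (Clause α)) : Prop :=
  ∃ Q H : Finset α, Q ∩ H = ∅ ∧ Q ∪ H = varsT T ∧ ∀ c ∈ T, QHcond Q H c

/-- `T` is q-Horn: some renaming of `T` has a QH-partition. -/
def IsQHorn (T : Finset (Clause α)) : Prop := ∃ V : Finset α, HasQHPartition (renTheory V T)

/-- Satisfaction of a literal by an interpretation (a set of atoms). -/
def litSat (I : Set α) (l : α × Bool) : Prop := if l.2 then l.1 ∈ I else l.1 ∉ I

/-- Satisfaction of a clause (read disjunctively). -/
def clauseSat (I : Set α) (c : Clause α) : Prop := ∃ l ∈ c, litSat I l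

/-- Satisfaction of a term (read conjunctively). -/
def termSat (I : Set α) (t : Clause α) : Prop := ∀ l ∈ t, litSat I l

/-- Satisfaction of a CNF theory. -/
def cnfSat (I : Set α) (T : Finset (Clause α)) : Prop := ∀ c ∈ T, clauseSat I c

/-- One step of the resolution closure. -/
def resStep (S : Set (Clause α)) : Set (Clause α) :=
  S ∪ {d | ∃ c ∈ S, ∃ c' ∈ S, ∃ p : α, ResolvableOn c c' p ∧ d = res c c' p}

/-- The iterated resolution closure `res^n_T`. -/
def resIter (T : Finset (Clause α)) : ℕ → Set (Clause α)
  | 0 => (↑T : Set (Clause α))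
  | n + 1 => resStep (resIter T n)

/-- Propositional formulas over atoms `α`. -/
inductive PropForm (α : Type*) where
  | var : α → PropForm α
  | tru : PropForm α
  | fls : PropForm α
  | neg : PropForm α → PropForm α
  | conj : PropForm α → PropForm α → PropForm α
  | disj : PropForm α → PropForm α → PropForm α

namespace PropForm

/-- Satisfaction of a formula by an interpretation. -/
def Sat (I : Set α) : PropForm α → Prop
  | var p => p ∈ I
  | tru => True
  | fls => False
  | neg φ => ¬ Sat I φ
  | conj φ ψ => Sat I φ ∧ Sat I ψ
  | disj φ ψ => Sat I φ ∨ Sat I ψ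

/-- Logical equivalence: same models. -/
def equivalent (φ ψ : PropForm α) : Prop := ∀ I : Set α, Sat I φ ↔ Sat I ψ

/-- Entailment: every model of `φ` is a model of `ψ`. -/
def entails (φ ψ : PropForm α) : Prop := ∀ I : Set α, Sat I φ → Sat I ψ

/-- The atoms occurring in a formula. -/
def vars : PropForm α → Finset α
  | var p => {p}
  | tru => ∅
  | fls => ∅
  | neg φ => vars φ
  | conj φ ψ => vars φ ∪ vars ψ
  | disj φ ψ => vars φ ∪ vars ψ

/-- Substitution of the formula `χ` for the atom `p`. -/
def subst (p : α) (χ : PropForm α) : PropForm α → PropForm α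
  | var q => if q = p then χ else var q
  | tru => tru
  | fls => fls
  | neg φ => neg (subst p χ φ)
  | conj φ ψ => conj (subst p χ φ) (subst p χ ψ)
  | disj φ ψ => disj (subst p χ φ) (subst p χ ψ)

/-- Forgetting a single atom: `Forget(φ, {p}) = φ[p/⊤] ∨ φ[p/⊥]`. -/
def forget1 (φ : PropForm α) (p : α) : PropForm α := disj (subst p tru φ) (subst p fls φ)

/-- Forgetting a set of atoms (presented as a list), one atom at a time:
`Forget(φ, ∅) = φ` and `Forget(φ, V ∪ {p}) = Forget(Forget(φ, {p}), V)`. -/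
def Forget : PropForm α → List α → PropForm α
  | φ, [] => φ
  | φ, p :: V => Forget (forget1 φ p) V

/-- Renaming of a formula: replace each occurrence of an atom `p ∈ V` by `¬p`. -/
def renForm (V : Finset α) : PropForm α → PropForm α
  | var p => if p ∈ V then neg (var p) else var p
  | tru => tru
  | fls => fls
  | neg φ => neg (renForm V φ)
  | conj φ ψ => conj (renForm V φ) (renForm V ψ)
  | disj φ ψ => disj (renForm V φ) (renForm V ψ)

/-- `φ` is irrelevant to the atoms in `V`: it is equivalent to a formula not
mentioning any atom of `V`. -/
def IR (φ : PropForm α) (V : List α) : Prop :=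
  ∃ φ' : PropForm α, equivalent φ φ' ∧ ∀ p ∈ V, p ∉ vars φ'

end PropForm

/-- The formula corresponding to a literal. -/
def litToForm (l : α × Bool) : PropForm α :=
  if l.2 then PropForm.var l.1 else PropForm.neg (PropForm.var l.1)

/-- The disjunction of the literals of a clause. -/
noncomputable def clauseToForm (c : Clause α) : PropForm α :=
  c.toList.foldr (fun l φ => PropForm.disj (litToForm l) φ) PropForm.fls

/-- The conjunction of the clauses of a CNF theory. -/
noncomputable def cnfToForm (T : Finset (Clause α)) : PropForm α :=
  T.toList.foldr (fun c φ => PropForm.conj (clauseToForm c) φ) PropForm.tru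

/-- `φ` is Horn expressible. -/
def HornExpressible (φ : PropForm α) : Prop :=
  ∃ T : Finset (Clause α), (∀ c ∈ T, IsClause c) ∧ IsHornTheory T ∧
    PropForm.equivalent φ (cnfToForm T)

/-- `φ` is Krom expressible. -/
def KromExpressible (φ : PropForm α) : Prop :=
  ∃ T : Finset (Clause α), (∀ c ∈ T, IsClause c) ∧ IsKromTheory T ∧
    PropForm.equivalent φ (cnfToForm T)

/-- `φ` is renamable-Horn expressible. -/
def RenHornExpressible (φ : PropForm α) : Prop :=
  ∃ T : Finset (Clause α), (∀ c ∈ T, IsClause c) ∧ IsRenHorn T ∧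
    PropForm.equivalent φ (cnfToForm T)

/-- `φ` is q-Horn expressible. -/
def QHornExpressible (φ : PropForm α) : Prop :=
  ∃ T : Finset (Clause α), (∀ c ∈ T, IsClause c) ∧ IsQHorn T ∧
    PropForm.equivalent φ (cnfToForm T)

/-- A formula entails a clause. -/
def EntailsClause (φ : PropForm α) (c : Clause α) : Prop :=
  ∀ I : Set α, PropForm.Sat I φ → clauseSat I c

/-- A prime implicate of a formula. -/
def IsPrimeImplicate (φ : PropForm α) (c : Clause α) : Prop :=
  IsClause c ∧ EntailsClause φ c ∧ ∀ c' ⊂ c, ¬ EntailsClause φ c'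

/-- A term entails a formula. -/
def TermEntails (t : Clause α) (φ : PropForm α) : Prop :=
  ∀ I : Set α, termSat I t → PropForm.Sat I φ

/-- A prime implicant of a formula. -/
def IsPrimeImplicant (φ : PropForm α) (t : Clause α) : Prop :=
  IsClause t ∧ TermEntails t φ ∧ ∀ t' ⊂ t, ¬ TermEntails t' φ

/-- A CNF theory entails a clause. -/
def TheoryEntailsClause (T : Finset (Clause α)) (c : Clause α) : Prop :=
  ∀ I : Set α, cnfSat I T → clauseSat I c

/-- A prime implicate of a CNF theory. -/
def IsPrimeImplicateT (T : Finset (Clause α)) (c : Clause α) : Prop :=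
  IsClause c ∧ TheoryEntailsClause T c ∧ ∀ c' ⊂ c, ¬ TheoryEntailsClause T c'

/-- The set of prime implicates of a CNF theory, as a finite theory. -/
noncomputable def PI (T : Finset (Clause α)) : Finset (Clause α) :=
  (Set.toFinite {c : Clause α | IsPrimeImplicateT T c}).toFinset

/-- Strong unfolding of a CNF theory w.r.t. an atom `p`: keep the clauses not
mentioning `p`, and replace the clauses containing the positive literal `p` by all
their resolvents with clauses containing `¬p`; clauses containing `¬p` are removed. -/
def unfold1 (T : Finset (Clause α)) (p : α) : Finset (Clause α) :=
  T.filter (fun c => (p, true) ∉ c ∧ (p, false) ∉ c) ∪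
    ((T ×ˢ T).filter fun cc =>
        (p, true) ∈ cc.1 ∧ (p, false) ∈ cc.2 ∧ IsClause (res cc.1 cc.2 p)).image
      fun cc => res cc.1 cc.2 p

/-- Iterated strong unfolding w.r.t. a set of atoms (presented as a list):
`unfold(T, ∅) = T` and `unfold(T, V ∪ {p}) = unfold(unfold(T, p), V)`. -/
def unfoldList (T : Finset (Clause α)) : List α → Finset (Clause α)
  | [] => T
  | p :: V => unfoldList (unfold1 T p) V

theorem sat_subst_tru (I : Set α) (p : α) (φ : PropForm α) :
    PropForm.Sat I (PropForm.subst p PropForm.tru φ) ↔ PropForm.Sat (insert p I) φ := by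
  induction φ with
  | var q =>
    by_cases h : q = p <;> simp [PropForm.subst, PropForm.Sat, h]
  | tru => simp [PropForm.subst, PropForm.Sat]
  | fls => simp [PropForm.subst, PropForm.Sat]
  | neg φ ih => simp [PropForm.subst, PropForm.Sat, ih]
  | conj φ ψ ih1 ih2 => simp [PropForm.subst, PropForm.Sat, ih1, ih2]
  | disj φ ψ ih1 ih2 => simp [PropForm.subst, PropForm.Sat, ih1, ih2]

theorem sat_subst_fls (I : Set α) (p : α) (φ : PropForm α) :
    PropForm.Sat I (PropForm.subst p PropForm.fls φ) ↔ PropForm.Sat (I \ {p}) φ := by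
  induction φ with
  | var q =>
    by_cases h : q = p <;> simp [PropForm.subst, PropForm.Sat, h]
  | tru => simp [PropForm.subst, PropForm.Sat]
  | fls => simp [PropForm.subst, PropForm.Sat]
  | neg φ ih => simp [PropForm.subst, PropForm.Sat, ih]
  | conj φ ψ ih1 ih2 => simp [PropForm.subst, PropForm.Sat, ih1, ih2]
  | disj φ ψ ih1 ih2 => simp [PropForm.subst, PropForm.Sat, ih1, ih2]

theorem sat_litToForm (I : Set α) (l : α × Bool) :
    PropForm.Sat I (litToForm l) ↔ litSat I l := by
  rcases l with ⟨q, b⟩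
  cases b <;> simp [litToForm, litSat, PropForm.Sat]

theorem sat_clauseToForm (I : Set α) (c : Clause α) :
    PropForm.Sat I (clauseToForm c) ↔ clauseSat I c := by
  have key : ∀ L : List (α × Bool), PropForm.Sat I
      (L.foldr (fun l φ => PropForm.disj (litToForm l) φ) PropForm.fls) ↔
        ∃ l ∈ L, litSat I l := by
    intro L
    induction L with
    | nil => simp [PropForm.Sat]
    | cons a L ih => simp only [List.foldr_cons, PropForm.Sat, ih, sat_litToForm,
        List.exists_mem_cons_iff]
  simpa [clauseToForm, clauseSat] using key c.toList

theorem sat_cnfToForm (I : Set α) (T : Finset (Clause α)) :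
    PropForm.Sat I (cnfToForm T) ↔ cnfSat I T := by
  have key : ∀ L : List (Clause α), PropForm.Sat I
      (L.foldr (fun c φ => PropForm.conj (clauseToForm c) φ) PropForm.tru) ↔
        ∀ c ∈ L, clauseSat I c := by
    intro L
    induction L with
    | nil => simp [PropForm.Sat]
    | cons a L ih => simp only [List.foldr_cons, PropForm.Sat, ih, sat_clauseToForm,
        List.forall_mem_cons]
  simpa [cnfToForm, cnfSat] using key T.toList

theorem litSat_insert (I : Set α) (p : α) (l : α × Bool) (h : l.1 ≠ p) :
    litSat (insert p I) l ↔ litSat I l := by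
  simp [litSat, h]

theorem litSat_diff (I : Set α) (p : α) (l : α × Bool) (h : l.1 ≠ p) :
    litSat (I \ {p}) l ↔ litSat I l := by
  simp [litSat, h]

theorem mem_res (c c' : Clause α) (p : α) (l : α × Bool) :
    l ∈ res c c' p ↔ (l ∈ c ∨ l ∈ c') ∧ l.1 ≠ p := by
  rcases l with ⟨q, b⟩
  cases b <;> simp [res]

theorem mem_unfold1 (T : Finset (Clause α)) (p : α) (d : Clause α) :
    d ∈ unfold1 T p ↔ (d ∈ T ∧ (p, true) ∉ d ∧ (p, false) ∉ d) ∨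
      ∃ c ∈ T, ∃ c' ∈ T, (p, true) ∈ c ∧ (p, false) ∈ c' ∧ IsClause (res c c' p) ∧
        res c c' p = d := by
  simp only [unfold1, Finset.mem_union, Finset.mem_filter, Finset.mem_image, Finset.mem_product,
    Prod.exists]
  grind

theorem fst_ne_of_not_mem (c : Clause α) (p : α) (l : α × Bool) (hl : l ∈ c)
    (h1 : (p, true) ∉ c) (h2 : (p, false) ∉ c) : l.1 ≠ p := by
  rcases l with ⟨q, b⟩
  rintro rfl
  cases b <;> contradiction

theorem cnfSat_unfold1 (T : Finset (Clause α)) (hT : ∀ c ∈ T, IsClause c) (p : α) (I : Set α) :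
    (cnfSat (insert p I) T ∨ cnfSat (I \ {p}) T) ↔ cnfSat I (unfold1 T p) := by
  constructor
  · rintro (h | h) d hd
    · rcases (mem_unfold1 T p d).1 hd with ⟨hdT, h1, h2⟩ | ⟨c, hc, c', hc', h1, h2, -, rfl⟩
      · obtain ⟨l, hl, hs⟩ := h d hdT
        exact ⟨l, hl, (litSat_insert I p l (fst_ne_of_not_mem d p l hl h1 h2)).1 hs⟩
      · obtain ⟨l, hl, hs⟩ := h c' hc'
        have hne : l.1 ≠ p := by
          rcases l with ⟨q, b⟩
          rintro rfl
          cases b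
          · simp [litSat] at hs
          · exact hT c' hc' _ ⟨hl, h2⟩
        exact ⟨l, (mem_res _ _ _ _).2 ⟨Or.inr hl, hne⟩, (litSat_insert I p l hne).1 hs⟩
    · rcases (mem_unfold1 T p d).1 hd with ⟨hdT, h1, h2⟩ | ⟨c, hc, c', hc', h1, h2, -, rfl⟩
      · obtain ⟨l, hl, hs⟩ := h d hdT
        exact ⟨l, hl, (litSat_diff I p l (fst_ne_of_not_mem d p l hl h1 h2)).1 hs⟩
      · obtain ⟨l, hl, hs⟩ := h c hc
        have hne : l.1 ≠ p := by
          rcases l with ⟨q, b⟩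
          rintro rfl
          cases b
          · exact hT c hc _ ⟨h1, hl⟩
          · simp [litSat] at hs
        exact ⟨l, (mem_res _ _ _ _).2 ⟨Or.inl hl, hne⟩, (litSat_diff I p l hne).1 hs⟩
  · intro h
    by_contra hcon
    simp only [cnfSat, not_or, not_forall] at hcon
    obtain ⟨⟨c', hc', hn'⟩, c, hc, hn⟩ := hcon
    have f' : ∀ l ∈ c', l.1 ≠ p → ¬ litSat I l := fun l hl hne hs =>
      hn' ⟨l, hl, (litSat_insert I p l hne).2 hs⟩
    have f : ∀ l ∈ c, l.1 ≠ p → ¬ litSat I l := fun l hl hne hs =>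
      hn ⟨l, hl, (litSat_diff I p l hne).2 hs⟩
    have a' : (p, true) ∉ c' := fun hm => hn' ⟨_, hm, by simp [litSat]⟩
    have a : (p, false) ∉ c := fun hm => hn ⟨_, hm, by simp [litSat]⟩
    have b' : (p, false) ∈ c' := by
      by_contra hb
      obtain ⟨l, hl, hs⟩ := h c' ((mem_unfold1 T p c').2 (Or.inl ⟨hc', a', hb⟩))
      exact f' l hl (fst_ne_of_not_mem c' p l hl a' hb) hs
    have b : (p, true) ∈ c := by
      by_contra hb
      obtain ⟨l, hl, hs⟩ := h c ((mem_unfold1 T p c).2 (Or.inl ⟨hc, hb, a⟩))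
      exact f l hl (fst_ne_of_not_mem c p l hl hb a) hs
    have g : ∀ l ∈ res c c' p, ¬ litSat I l := by
      intro l hl
      obtain ⟨hm | hm, hne⟩ := (mem_res _ _ _ _).1 hl
      · exact f l hm hne
      · exact f' l hm hne
    have hcl : IsClause (res c c' p) := by
      rintro q ⟨h1, h2⟩
      have g1 := g _ h1
      have g2 := g _ h2
      simp [litSat] at g1 g2
      exact g1 g2
    obtain ⟨l, hl, hs⟩ := h _ ((mem_unfold1 T p _).2
      (Or.inr ⟨c, hc, c', hc', b, b', hcl, rfl⟩))
    exact g l hl hs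

/-- `Forget(Π, {p}) ≡ unfold(Π, p)` for a CNF theory `Π`. -/
theorem forget_equiv_unfold
    (T : Finset (Clause α)) (hT : ∀ c ∈ T, IsClause c) (p : α) :
    PropForm.equivalent (PropForm.Forget (cnfToForm T) [p])
      (cnfToForm (unfold1 T p)) := by
  intro I
  rw [sat_cnfToForm, ← cnfSat_unfold1 T hT p I]
  simp only [PropForm.Forget, PropForm.forget1, PropForm.Sat, sat_subst_tru, sat_subst_fls,
    sat_cnfToForm]
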